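/- Fix real numbers v, w, s, t, m, ρ with w > 0, s < t, m > 0 and ρ > 0. For each positive integer N with 4N > max(m, ρ), let q = q_N = exp(−2/√N), θ_m = arccos(1 − m/(2N)) and θ_ρ = arccos(1 − ρ/(2N)). Then the limit as N → ∞ of [ (q;q)_∞ (−q^{v+w+s};q)_∞ (q^{t−s};q)_∞ · ∏_{σ∈{+1,−1}} (q^{v+t/2} e^{σiθ_ρ};q)_∞ (−q^{w+t/2} e^{σiθ_ρ};q)_∞ · (e^{2iθ_m};q)_∞ (e^{−2iθ_m};q)_∞ ] / [ 4πN √(m/N) · (−q^{v+w+t};q)_∞ · ∏_{σ∈{+1,−1}} (q^{v+s/2} e^{σiθ_m};q)_∞ (−q^{w+s/2} e^{σiθ_m};q)_∞ · ∏_{σ∈{+1,−1}} (q^{(t−s)/2} e^{σi(θ_ρ+θ_m)};q)_∞ (q^{(t−s)/2} e^{σi(θ_ρ−θ_m)};q)_∞ ] exists and equals |Γ(v+s/2+i√m/2)|² · |Γ((t−s)/2 + i(√ρ+√m)/2)|² · |Γ((t−s)/2 + i(√ρ−√m)/2)|² / ( 8π √m · Γ(t−s) · |Γ(v+t/2+i√ρ/2)|²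 · |Γ(i√m)|² ). -/

import Mathlib

open Filter

/-- Infinite q-Pochhammer symbol `(a;q)_∞ = ∏_{k=0}^∞ (1 - a q^k)` for complex `a, q`. -/
noncomputable def qPochInf (a q : ℂ) : ℂ := ∏' k : ℕ, (1 - a * q ^ k)

/-- Weak asymmetry scaling `q_N = exp(-2/√N)`. -/
noncomputable def qN (N : ℕ) : ℝ := Real.exp (-2 / Real.sqrt N)

/-- Real powers of `q_N`: `q_N^x = exp(-2x/√N)`, as a complex number. -/
noncomputable def qpow (N : ℕ) (x : ℝ) : ℂ := Complex.ofReal (Real.exp (-2 * x / Real.sqrt N))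

/-- `e^{ix}` for real `x`. -/
noncomputable def eI (x : ℝ) : ℂ := Complex.exp (Complex.I * x)

/-- `|Γ(a+ib)|² := Γ(a+ib)·Γ(a−ib)` for real `a, b`. -/
noncomputable def GammaSq (a b : ℝ) : ℂ :=
  Complex.Gamma ((a : ℂ) + (b : ℂ) * Complex.I) * Complex.Gamma ((a : ℂ) - (b : ℂ) * Complex.I)

/-!
The `q`-Gamma function is `Γ_q(x) = (q; q)_∞ / (q^x; q)_∞ * (1 - q)^(1 - x)`, and `1 / Γ_q(x + 1)`
is a product of factors `(1 + b_k [x]_q) (1 + b_k)^(-x)`, the `q`-analogue of Euler's product for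
`1 / Γ(x + 1)`, in which `b_k = 1 / (k + 1)` and `[x]_q` is `x`. The factors are `1 + O(1 / k²)`
uniformly for `q` near `1` and `x` bounded, so dominated convergence for infinite products gives
`1 / Γ_q → 1 / Γ` locally uniformly. The same argument applies to `(-q^x; q)_∞`, where `b_k → 0`
and the limit is `1`. Since `e^(iθ_m) = q^(-i√N θ_m / 2)` and `√N θ_m → √m`, every symbol in the
density converges after normalisation. The powers of `1 + q` cancel between numerator and
denominator, and those of `1 - q` leave a single factor `(1 - q)⁻¹`, which is absorbed by
`√N (1 - q_N) → 2`.
-/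

open Topology

section PowerEstimates

lemma abs_log_one_add_sub_self_le {b : ℝ} (hb : -(1 / 2) ≤ b) :
    |Real.log (1 + b) - b| ≤ 2 * b ^ 2 := by
  have hpos : 0 < 1 + b := by linarith
  have upper : Real.log (1 + b) ≤ b := by linarith [Real.log_le_sub_one_of_pos hpos]
  have lower : b - 2 * b ^ 2 ≤ Real.log (1 + b) :=
    calc b - 2 * b ^ 2 ≤ 1 - (1 + b)⁻¹ := by
          rw [← sub_nonneg]
          have : 1 - (1 + b)⁻¹ - (b - 2 * b ^ 2) = b ^ 2 * (1 + 2 * b) / (1 + b) := by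
            field_simp
            ring
          rw [this]
          exact div_nonneg (mul_nonneg (sq_nonneg b) (by linarith)) hpos.le
      _ ≤ Real.log (1 + b) := Real.one_sub_inv_le_log_of_pos hpos
  rw [abs_le]
  constructor <;> nlinarith [sq_nonneg b]

lemma exists_norm_one_add_cpow_sub_le (R : ℝ) :
    ∃ C, 0 ≤ C ∧ ∀ b ∈ Set.Icc (-(1 / 2) : ℝ) 1, ∀ x : ℂ, ‖x‖ ≤ R →
      ‖((1 + b : ℝ) : ℂ) ^ x - 1 - b * x‖ ≤ C * b ^ 2 := by
  refine ⟨(3 * R) ^ 2 * Real.exp (3 * R) + 2 * |R|, by positivity, fun b ⟨hb, hb'⟩ x hx ↦ ?_⟩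
  have hR : 0 ≤ R := (norm_nonneg x).trans hx
  have hpos : 0 < 1 + b := by linarith
  have hb_abs : |b| ≤ 1 := abs_le.2 ⟨by linarith, hb'⟩
  have hlog := abs_log_one_add_sub_self_le hb
  have hlog_abs : |Real.log (1 + b)| ≤ 3 * |b| := by
    have := abs_add_le (Real.log (1 + b) - b) b
    rw [sub_add_cancel] at this
    nlinarith [sq_abs b, abs_nonneg b]
  set z : ℂ := x * Real.log (1 + b) with hz
  have hz_norm : ‖z‖ ≤ 3 * R * |b| := by
    rw [hz, norm_mul, Complex.norm_real, Real.norm_eq_abs]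
    calc ‖x‖ * |Real.log (1 + b)| ≤ R * (3 * |b|) := by gcongr
      _ = 3 * R * |b| := by ring
  have hexp : ‖Complex.exp z - 1 - z‖ ≤ (3 * R) ^ 2 * Real.exp (3 * R) * b ^ 2 := by
    have hz_le : ‖z‖ ≤ 3 * R := hz_norm.trans (mul_le_of_le_one_right (by positivity) hb_abs)
    calc ‖Complex.exp z - 1 - z‖ ≤ ‖z‖ ^ 2 * Real.exp ‖z‖ := by
          simpa [Finset.sum_range_succ, sub_sub] using
            Complex.norm_exp_sub_sum_le_norm_mul_exp z 2
      _ ≤ (3 * R * |b|) ^ 2 * Real.exp (3 * R) := by gcongr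
      _ = (3 * R) ^ 2 * Real.exp (3 * R) * b ^ 2 := by rw [mul_pow, sq_abs]; ring
  have hlin : ‖x * ((Real.log (1 + b) - b : ℝ) : ℂ)‖ ≤ |R| * (2 * b ^ 2) := by
    rw [norm_mul, Complex.norm_real, Real.norm_eq_abs, abs_of_nonneg hR]
    gcongr
  have hsplit : ((1 + b : ℝ) : ℂ) ^ x - 1 - b * x =
      (Complex.exp z - 1 - z) + x * ((Real.log (1 + b) - b : ℝ) : ℂ) := by
    rw [Complex.cpow_def_of_ne_zero (by exact_mod_cast hpos.ne'), ← Complex.ofReal_log hpos.le,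
      mul_comm _ x, ← hz]
    push_cast [hz]
    ring
  rw [hsplit]
  linarith [norm_add_le (Complex.exp z - 1 - z) (x * ((Real.log (1 + b) - b : ℝ) : ℂ))]

end PowerEstimates

/-- The factor `(1 + b c) (1 + b)^(-x)`. With `c = x` and `b = 1/(k+1)` it is the `k`-th factor of
Euler's product for `1 / Γ(x + 1)`; with `c` the `q`-number `[x]_q` and `b = eulerStep σ q k` it is
the corresponding factor for `qPochRatio σ q (x + 1)`. -/
noncomputable def eulerFactor (b : ℝ) (c x : ℂ) : ℂ := (1 + b * c) * ((1 + b : ℝ) : ℂ) ^ (-x)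

lemma exists_norm_eulerFactor_sub_one_le (R : ℝ) :
    ∃ C, 0 ≤ C ∧ ∀ b ∈ Set.Icc (-(1 / 2) : ℝ) 1, ∀ c x : ℂ, ‖c‖ ≤ R → ‖x‖ ≤ R →
      ‖eulerFactor b c x - 1‖ ≤ |b| * ‖c - x‖ + C * b ^ 2 := by
  obtain ⟨C, hC, hpow⟩ := exists_norm_one_add_cpow_sub_le R
  refine ⟨R ^ 2 + (1 + |R|) * C, by positivity, fun b hb c x hc hx ↦ ?_⟩
  have hR : 0 ≤ R := (norm_nonneg x).trans hx
  have hb_abs : |b| ≤ 1 := abs_le.2 ⟨by linarith [hb.1], hb.2⟩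
  set E : ℂ := ((1 + b : ℝ) : ℂ) ^ (-x) - 1 - b * (-x) with hE
  have hE_norm : ‖E‖ ≤ C * b ^ 2 := hpow b hb (-x) (by rwa [norm_neg])
  have hquad : ‖(b : ℂ) ^ 2 * (c * x)‖ ≤ b ^ 2 * (R * R) := by
    rw [norm_mul, norm_pow, Complex.norm_real, Real.norm_eq_abs, sq_abs, norm_mul]
    gcongr
  have hfac : ‖(1 + b * c) * E‖ ≤ (1 + |R|) * (C * b ^ 2) := by
    rw [norm_mul, abs_of_nonneg hR]
    gcongr
    calc ‖1 + b * c‖ ≤ 1 + |b| * ‖c‖ := by simpa using norm_add_le 1 ((b : ℂ) * c)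
      _ ≤ 1 + 1 * R := by gcongr
      _ = 1 + R := by rw [one_mul]
  have hsplit : eulerFactor b c x - 1 = b * (c - x) - (b : ℂ) ^ 2 * (c * x) + (1 + b * c) * E := by
    rw [eulerFactor, hE]
    ring
  calc ‖eulerFactor b c x - 1‖
      ≤ ‖(b : ℂ) * (c - x)‖ + ‖(b : ℂ) ^ 2 * (c * x)‖ + ‖(1 + b * c) * E‖ := by
        rw [hsplit]
        exact (norm_add_le _ _).trans (add_le_add_left (norm_sub_le _ _) _)
    _ ≤ |b| * ‖c - x‖ + b ^ 2 * (R * R) + (1 + |R|) * (C * b ^ 2) := by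
        rw [norm_mul (b : ℂ), Complex.norm_real, Real.norm_eq_abs]
        gcongr
    _ = |b| * ‖c - x‖ + (R ^ 2 + (1 + |R|) * C) * b ^ 2 := by ring

/-- The `q`-number `[x]_q = (1 - q^x) / (1 - q)`. -/
noncomputable def qNumber (q : ℝ) (x : ℂ) : ℂ := (1 - (q : ℂ) ^ x) / (1 - q)

lemma exists_norm_qNumber_sub_le (R : ℝ) :
    ∃ C, ∀ q ∈ Set.Ico (1 / 2 : ℝ) 1, ∀ x : ℂ, ‖x‖ ≤ R → ‖qNumber q x - x‖ ≤ C * (1 - q) := by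
  obtain ⟨C, -, hpow⟩ := exists_norm_one_add_cpow_sub_le R
  refine ⟨C, fun q ⟨hq, hq'⟩ x hx ↦ ?_⟩
  have hpos : 0 < 1 - q := sub_pos.2 hq'
  have hne : (1 - q : ℂ) ≠ 0 := by exact_mod_cast hpos.ne'
  have hnum : ‖(q : ℂ) ^ x - 1 - (q - 1) * x‖ ≤ C * (1 - q) ^ 2 := by
    have := hpow (q - 1) ⟨by linarith, by linarith⟩ x hx
    rwa [add_sub_cancel, Complex.ofReal_sub, Complex.ofReal_one, ← sq_abs, abs_sub_comm,
      sq_abs] at this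
  have hsplit : qNumber q x - x = -((q : ℂ) ^ x - 1 - (q - 1) * x) / ((1 - q : ℝ) : ℂ) := by
    rw [qNumber]
    push_cast
    field_simp
    ring
  rw [hsplit, norm_div, norm_neg, Complex.norm_real, Real.norm_of_nonneg hpos.le,
    div_le_iff₀ hpos]
  linarith [sq (1 - q)]

lemma eventually_norm_snd_le {α : Type*} (l : Filter α) (x : ℂ) :
    ∀ᶠ p : α × ℂ in l ×ˢ 𝓝 x, ‖p.2‖ ≤ ‖x‖ + 1 :=
  (tendsto_snd.norm.eventually (gt_mem_nhds (lt_add_one ‖x‖))).mono fun _ h ↦ h.le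

lemma eventually_mem_Ico_half_one : ∀ᶠ q : ℝ in 𝓝[<] 1, q ∈ Set.Ico (1 / 2 : ℝ) 1 :=
  Ico_mem_nhdsLT (by norm_num)

lemma tendsto_qNumber (x : ℂ) :
    Tendsto (fun p : ℝ × ℂ ↦ qNumber p.1 p.2) (𝓝[<] 1 ×ˢ 𝓝 x) (𝓝 x) := by
  obtain ⟨C, hC⟩ := exists_norm_qNumber_sub_le (‖x‖ + 1)
  have hdiff : Tendsto (fun p : ℝ × ℂ ↦ qNumber p.1 p.2 - p.2) (𝓝[<] 1 ×ˢ 𝓝 x) (𝓝 0) := by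
    refine squeeze_zero_norm' (a := fun p ↦ C * (1 - p.1)) ?_ ?_
    · filter_upwards [tendsto_fst.eventually eventually_mem_Ico_half_one,
        eventually_norm_snd_le _ x] with p hq hx using hC p.1 hq p.2 hx
    · have hq : Tendsto (fun p : ℝ × ℂ ↦ p.1) (𝓝[<] 1 ×ˢ 𝓝 x) (𝓝 1) :=
        tendsto_fst.mono_right nhdsWithin_le_nhds
      simpa using (hq.const_sub 1).const_mul C
  simpa using hdiff.add tendsto_snd

/-- The step `σ q^(k+1) (1 - q) / (1 - σ q^(k+1))`, chosen so that `1 + eulerStep σ q k` is the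
quotient of the consecutive factors `1 - σ q^(k+2)` and `1 - σ q^(k+1)`. -/
noncomputable def eulerStep (σ q : ℝ) (k : ℕ) : ℝ :=
  σ * q ^ (k + 1) * (1 - q) / (1 - σ * q ^ (k + 1))

lemma quadratic_mul_pow_le_one {q : ℝ} (hq : 0 < q) (hq' : q ≤ 1) (n : ℕ) :
    (1 + n * (1 - q) + (n * (1 - q)) ^ 2 / 2) * q ^ n ≤ 1 := by
  have hlog : 1 - q ≤ -Real.log q := by linarith [Real.log_le_sub_one_of_pos hq]
  have hn : 0 ≤ n * (1 - q) := mul_nonneg n.cast_nonneg (sub_nonneg.2 hq')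
  have hexp : Real.exp (n * -Real.log q) * q ^ n = 1 := by
    rw [Real.exp_nat_mul, Real.exp_neg, Real.exp_log hq, inv_pow, inv_mul_cancel₀ (by positivity)]
  calc (1 + n * (1 - q) + (n * (1 - q)) ^ 2 / 2) * q ^ n
      ≤ Real.exp (n * (1 - q)) * q ^ n := by
        gcongr
        exact Real.quadratic_le_exp_of_nonneg hn
    _ ≤ Real.exp (n * -Real.log q) * q ^ n := by gcongr
    _ = 1 := hexp

section EulerStep

variable {σ q : ℝ}

lemma mul_pow_le_pow (hσ : |σ| ≤ 1) (hq : 0 < q) (n : ℕ) : σ * q ^ n ≤ q ^ n :=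
  mul_le_of_le_one_left (pow_nonneg hq.le n) ((le_abs_self σ).trans hσ)

lemma one_sub_mul_pow_succ_pos (hσ : |σ| ≤ 1) (hq : 0 < q) (hq' : q < 1) (k : ℕ) :
    0 < 1 - σ * q ^ (k + 1) :=
  sub_pos.2 ((mul_pow_le_pow hσ hq (k + 1)).trans_lt (pow_lt_one₀ hq.le hq' k.succ_ne_zero))

lemma one_add_eulerStep (hσ : |σ| ≤ 1) (hq : 0 < q) (hq' : q < 1) (k : ℕ) :
    1 + eulerStep σ q k = (1 - σ * q ^ (k + 2)) / (1 - σ * q ^ (k + 1)) := by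
  have := (one_sub_mul_pow_succ_pos hσ hq hq' k).ne'
  rw [eulerStep]
  field_simp
  ring

lemma abs_eulerStep_le (hσ : |σ| ≤ 1) (hq : 0 < q) (hq' : q < 1) (k : ℕ) :
    |eulerStep σ q k| ≤ q ^ (k + 1) * (1 - q) / (1 - q ^ (k + 1)) := by
  have hden : 0 < 1 - q ^ (k + 1) := sub_pos.2 (pow_lt_one₀ hq.le hq' k.succ_ne_zero)
  have hnum : 0 ≤ q ^ (k + 1) * (1 - q) := mul_nonneg (by positivity) (sub_nonneg.2 hq'.le)
  rw [eulerStep, abs_div, abs_of_pos (one_sub_mul_pow_succ_pos hσ hq hq' k), mul_assoc, abs_mul,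
    abs_of_nonneg hnum]
  exact div_le_div₀ hnum (mul_le_of_le_one_left hnum hσ) hden
    (sub_le_sub_left (mul_pow_le_pow hσ hq _) 1)

lemma abs_eulerStep_le_inv (hσ : |σ| ≤ 1) (hq : 0 < q) (hq' : q < 1) (k : ℕ) :
    |eulerStep σ q k| ≤ ((k : ℝ) + 1)⁻¹ := by
  have hden : 0 < 1 - q ^ (k + 1) := sub_pos.2 (pow_lt_one₀ hq.le hq' k.succ_ne_zero)
  have hquad := quadratic_mul_pow_le_one hq hq'.le (k + 1)
  have hsq : 0 ≤ ((k + 1 : ℕ) * (1 - q)) ^ 2 / 2 * q ^ (k + 1) := by positivity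
  refine (abs_eulerStep_le hσ hq hq' k).trans ?_
  rw [div_le_iff₀ hden, inv_mul_eq_div, le_div_iff₀ (by positivity)]
  push_cast at hquad hsq
  linarith

lemma abs_eulerStep_mul_one_sub_le (hσ : |σ| ≤ 1) (hq : 0 < q) (hq' : q < 1) (k : ℕ) :
    |eulerStep σ q k| * (1 - q) ≤ 2 * (((k : ℝ) + 1)⁻¹) ^ 2 := by
  have hden : 0 < 1 - q ^ (k + 1) := sub_pos.2 (pow_lt_one₀ hq.le hq' k.succ_ne_zero)
  have hquad := quadratic_mul_pow_le_one hq hq'.le (k + 1)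
  have hlin : 0 ≤ (k + 1 : ℕ) * (1 - q) * q ^ (k + 1) :=
    mul_nonneg (mul_nonneg (Nat.cast_nonneg _) (sub_nonneg.2 hq'.le)) (by positivity)
  calc |eulerStep σ q k| * (1 - q)
      ≤ q ^ (k + 1) * (1 - q) / (1 - q ^ (k + 1)) * (1 - q) :=
        mul_le_mul_of_nonneg_right (abs_eulerStep_le hσ hq hq' k) (sub_nonneg.2 hq'.le)
    _ ≤ 2 * (((k : ℝ) + 1)⁻¹) ^ 2 := by
        rw [div_mul_eq_mul_div, div_le_iff₀ hden, inv_pow, mul_right_comm 2,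
          ← div_eq_mul_inv, le_div_iff₀ (by positivity)]
        push_cast at hquad hlin
        linarith

lemma eulerStep_mem_Icc (hσ : |σ| ≤ 1) (hq : 0 < q) (hq' : q < 1) (k : ℕ) :
    eulerStep σ q k ∈ Set.Icc (-(1 / 2) : ℝ) 1 := by
  have hinv : ((k : ℝ) + 1)⁻¹ ≤ 1 := inv_le_one_of_one_le₀ (by linarith [k.cast_nonneg (α := ℝ)])
  refine ⟨?_, (le_abs_self _).trans ((abs_eulerStep_le_inv hσ hq hq' k).trans hinv)⟩
  have hmul : |σ * q ^ (k + 1)| ≤ 1 := by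
    rw [abs_mul, abs_of_nonneg (by positivity : 0 ≤ q ^ (k + 1))]
    exact mul_le_one₀ hσ (by positivity) (pow_le_one₀ hq.le hq'.le)
  rw [eulerStep, le_div_iff₀ (one_sub_mul_pow_succ_pos hσ hq hq' k)]
  linarith [mul_nonneg (sub_nonneg.2 hq'.le) (neg_le_iff_add_nonneg.1 (abs_le.1 hmul).1),
    mul_nonneg hq.le (sub_nonneg.2 (abs_le.1 hmul).2)]

end EulerStep

section EulerStepLimit

lemma tendsto_eulerStep_of_ne_one {σ : ℝ} (hσ : σ ≠ 1) (k : ℕ) :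
    Tendsto (fun q ↦ eulerStep σ q k) (𝓝[<] 1) (𝓝 0) := by
  have hcont : ContinuousAt (fun q ↦ eulerStep σ q k) 1 := by
    refine ContinuousAt.div (by fun_prop) (by fun_prop) ?_
    simpa [sub_eq_zero] using hσ.symm
  have hval : eulerStep σ 1 k = 0 := by simp [eulerStep]
  exact (hval ▸ hcont.tendsto).mono_left nhdsWithin_le_nhds

lemma tendsto_eulerStep_one (k : ℕ) :
    Tendsto (fun q ↦ eulerStep 1 q k) (𝓝[<] 1) (𝓝 ((k : ℝ) + 1)⁻¹) := by
  have hgeom : (fun q : ℝ ↦ q ^ (k + 1) / ∑ i ∈ Finset.range (k + 1), q ^ i) =ᶠ[𝓝[<] 1]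
      fun q ↦ eulerStep 1 q k := by
    filter_upwards [self_mem_nhdsWithin] with q hq
    rw [eulerStep, one_mul, ← mul_neg_geom_sum, mul_comm (1 - q),
      mul_div_mul_right _ _ (sub_pos.2 hq).ne']
  refine Tendsto.congr' hgeom (Tendsto.mono_left ?_ nhdsWithin_le_nhds)
  have hcont : ContinuousAt (fun q : ℝ ↦ q ^ (k + 1) / ∑ i ∈ Finset.range (k + 1), q ^ i) 1 :=
    ContinuousAt.div (by fun_prop) (by fun_prop) (by simpa using k.cast_add_one_ne_zero)
  simpa using hcont.tendsto

end EulerStepLimit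

section InfiniteProducts

lemma summable_inv_natCast_add_one_sq : Summable fun k : ℕ ↦ (((k : ℝ) + 1)⁻¹) ^ 2 := by
  simpa using (summable_nat_add_iff 1).2 (Real.summable_nat_pow_inv.2 one_lt_two)

lemma multipliable_eulerFactor {b : ℕ → ℝ} {c x : ℂ} (hb : ∀ k, b k ∈ Set.Icc (-(1 / 2) : ℝ) 1)
    (hlin : Summable fun k ↦ |b k| * ‖c - x‖) (hsq : Summable fun k ↦ b k ^ 2) :
    Multipliable fun k ↦ eulerFactor (b k) c x := by
  obtain ⟨C, -, hC⟩ := exists_norm_eulerFactor_sub_one_le (max ‖c‖ ‖x‖)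
  have hsum : Summable fun k ↦ ‖eulerFactor (b k) c x - 1‖ :=
    .of_nonneg_of_le (fun _ ↦ norm_nonneg _)
      (fun k ↦ hC (b k) (hb k) c x (le_max_left _ _) (le_max_right _ _)) (hlin.add (hsq.mul_left C))
  simpa using multipliable_one_add_of_summable hsum

lemma multipliable_eulerFactor_eulerStep {σ q : ℝ} (hσ : |σ| ≤ 1) (hq : 0 < q) (hq' : q < 1)
    (c x : ℂ) : Multipliable fun k ↦ eulerFactor (eulerStep σ q k) c x := by
  have hpos : 0 < 1 - q := sub_pos.2 hq'
  have habs (k : ℕ) : |eulerStep σ q k| ≤ 2 * (((k : ℝ) + 1)⁻¹) ^ 2 / (1 - q) :=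
    (le_div_iff₀ hpos).2 (abs_eulerStep_mul_one_sub_le hσ hq hq' k)
  have hsum : Summable fun k ↦ |eulerStep σ q k| :=
    .of_nonneg_of_le (fun _ ↦ abs_nonneg _) habs
      ((summable_inv_natCast_add_one_sq.mul_left 2).div_const _)
  refine multipliable_eulerFactor (eulerStep_mem_Icc hσ hq hq') (hsum.mul_right _) ?_
  refine .of_nonneg_of_le (fun _ ↦ sq_nonneg _) (fun k ↦ ?_) summable_inv_natCast_add_one_sq
  exact sq_le_sq.2 ((abs_eulerStep_le_inv hσ hq hq' k).trans (le_abs_self _))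

lemma exists_norm_eulerFactor_eulerStep_sub_one_le (R : ℝ) :
    ∃ C, ∀ σ q : ℝ, |σ| ≤ 1 → q ∈ Set.Ico (1 / 2 : ℝ) 1 → ∀ x : ℂ, ‖x‖ ≤ R → ∀ k : ℕ,
      ‖eulerFactor (eulerStep σ q k) (qNumber q x) x - 1‖ ≤ C * (((k : ℝ) + 1)⁻¹) ^ 2 := by
  obtain ⟨A, hA⟩ := exists_norm_qNumber_sub_le R
  obtain ⟨C, hC, hfac⟩ := exists_norm_eulerFactor_sub_one_le (R + |A|)
  refine ⟨2 * |A| + C, fun σ q hσ hq x hx k ↦ ?_⟩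
  have hq0 : 0 < q := one_half_pos.trans_le hq.1
  have hdiff : ‖qNumber q x - x‖ ≤ |A| * (1 - q) :=
    (hA q hq x hx).trans (mul_le_mul_of_nonneg_right (le_abs_self A) (sub_nonneg.2 hq.2.le))
  have hnum : ‖qNumber q x‖ ≤ R + |A| := by
    have := norm_add_le (qNumber q x - x) x
    rw [sub_add_cancel] at this
    nlinarith [abs_nonneg A]
  have hstep := abs_eulerStep_mul_one_sub_le hσ hq0 hq.2 k
  have hsq : eulerStep σ q k ^ 2 ≤ (((k : ℝ) + 1)⁻¹) ^ 2 :=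
    sq_le_sq.2 ((abs_eulerStep_le_inv hσ hq0 hq.2 k).trans (le_abs_self _))
  calc ‖eulerFactor (eulerStep σ q k) (qNumber q x) x - 1‖
      ≤ |eulerStep σ q k| * ‖qNumber q x - x‖ + C * eulerStep σ q k ^ 2 :=
        hfac _ (eulerStep_mem_Icc hσ hq0 hq.2 k) _ _ hnum (hx.trans (by simp))
    _ ≤ |eulerStep σ q k| * (|A| * (1 - q)) + C * (((k : ℝ) + 1)⁻¹) ^ 2 := by gcongr
    _ = |A| * (|eulerStep σ q k| * (1 - q)) + C * (((k : ℝ) + 1)⁻¹) ^ 2 := by ring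
    _ ≤ |A| * (2 * (((k : ℝ) + 1)⁻¹) ^ 2) + C * (((k : ℝ) + 1)⁻¹) ^ 2 := by gcongr
    _ = (2 * |A| + C) * (((k : ℝ) + 1)⁻¹) ^ 2 := by ring

lemma tendsto_eulerFactor {α : Type*} {l : Filter α} {b : α → ℝ} {c x : α → ℂ} {b₀ : ℝ} {c₀ x₀ : ℂ}
    (hb : Tendsto b l (𝓝 b₀)) (hc : Tendsto c l (𝓝 c₀)) (hx : Tendsto x l (𝓝 x₀))
    (hb₀ : 0 < 1 + b₀) :
    Tendsto (fun a ↦ eulerFactor (b a) (c a) (x a)) l (𝓝 (eulerFactor b₀ c₀ x₀)) := by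
  have hbase : Tendsto (fun a ↦ ((1 + b a : ℝ) : ℂ)) l (𝓝 ((1 + b₀ : ℝ) : ℂ)) :=
    (Complex.continuous_ofReal.tendsto _).comp (hb.const_add 1)
  exact ((((Complex.continuous_ofReal.tendsto _).comp hb).mul hc).const_add 1).mul
    (hbase.cpow hx.neg (Or.inl (by simpa using hb₀)))

lemma tendsto_tprod_eulerFactor {σ : ℝ} (hσ : |σ| ≤ 1) {β : ℕ → ℝ}
    (hβ : ∀ k, Tendsto (fun q ↦ eulerStep σ q k) (𝓝[<] 1) (𝓝 (β k))) (x : ℂ) :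
    Tendsto (fun p : ℝ × ℂ ↦ ∏' k, eulerFactor (eulerStep σ p.1 k) (qNumber p.1 p.2) p.2)
      (𝓝[<] 1 ×ˢ 𝓝 x) (𝓝 (∏' k, eulerFactor (β k) x x)) := by
  obtain ⟨C, hC⟩ := exists_norm_eulerFactor_eulerStep_sub_one_le (‖x‖ + 1)
  have hβ_ge (k : ℕ) : -(1 / 2) ≤ β k :=
    ge_of_tendsto (hβ k) <| eventually_mem_Ico_half_one.mono fun q hq ↦
      (eulerStep_mem_Icc hσ (one_half_pos.trans_le hq.1) hq.2 k).1
  have hfactor (k : ℕ) : Tendsto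
      (fun p : ℝ × ℂ ↦ eulerFactor (eulerStep σ p.1 k) (qNumber p.1 p.2) p.2 - 1)
      (𝓝[<] 1 ×ˢ 𝓝 x) (𝓝 (eulerFactor (β k) x x - 1)) :=
    (tendsto_eulerFactor ((hβ k).comp tendsto_fst) (tendsto_qNumber x) tendsto_snd
      (by linarith [hβ_ge k])).sub_const 1
  have hbound : ∀ᶠ p : ℝ × ℂ in 𝓝[<] 1 ×ˢ 𝓝 x, ∀ k,
      ‖eulerFactor (eulerStep σ p.1 k) (qNumber p.1 p.2) p.2 - 1‖ ≤
        C * (((k : ℝ) + 1)⁻¹) ^ 2 := by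
    filter_upwards [tendsto_fst.eventually eventually_mem_Ico_half_one,
      eventually_norm_snd_le _ x] with p hq hx k using hC σ p.1 hσ hq p.2 hx k
  simpa using tendsto_tprod_one_add_of_dominated_convergence
    (summable_inv_natCast_add_one_sq.mul_left C) hfactor hbound

end InfiniteProducts

section QPochhammer

variable {a q : ℂ}

lemma summable_norm_mul_pow (a : ℂ) (hq : ‖q‖ < 1) : Summable fun k : ℕ ↦ ‖-(a * q ^ k)‖ := by
  simpa only [norm_neg, norm_mul, norm_pow] using
    (summable_geometric_of_lt_one (norm_nonneg q) hq).mul_left ‖a‖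

lemma tendsto_prod_qPochInf (a : ℂ) (hq : ‖q‖ < 1) :
    Tendsto (fun n ↦ ∏ k ∈ Finset.range n, (1 - a * q ^ k)) atTop (𝓝 (qPochInf a q)) := by
  have := multipliable_one_add_of_summable (summable_norm_mul_pow a hq)
  simp only [← sub_eq_add_neg] at this
  exact this.hasProd.tendsto_prod_nat

lemma qPochInf_ne_zero (hq : ‖q‖ < 1) (ha : ∀ k : ℕ, 1 - a * q ^ k ≠ 0) : qPochInf a q ≠ 0 := by
  simp only [sub_eq_add_neg] at ha
  simpa only [qPochInf, sub_eq_add_neg] using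
    tprod_one_add_ne_zero_of_summable ha (summable_norm_mul_pow a hq)

end QPochhammer

lemma prod_range_div_cpow {f : ℕ → ℝ} (hf : ∀ k, 0 < f k) (z : ℂ) (n : ℕ) :
    ∏ k ∈ Finset.range n, ((f (k + 1) / f k : ℝ) : ℂ) ^ z = ((f n / f 0 : ℝ) : ℂ) ^ z := by
  induction n with
  | zero => simp [(hf 0).ne']
  | succ n ih =>
    rw [Finset.prod_range_succ, ih, mul_comm, ← Complex.mul_cpow_ofReal_nonneg
      (div_pos (hf _) (hf _)).le (div_pos (hf _) (hf _)).le, ← Complex.ofReal_mul,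
      div_mul_div_cancel₀ (hf n).ne']

/-- The quotient `(σ q^x; q)_∞ / (σ q; q)_∞ * (1 - σ q)^(x - 1)`. For `σ = 1` it is the reciprocal
`1 / Γ_q(x)` of the `q`-Gamma function. -/
noncomputable def qPochRatio (σ q : ℝ) (x : ℂ) : ℂ :=
  qPochInf (σ * (q : ℂ) ^ x) q / qPochInf (σ * q) q * ((1 - σ * q : ℝ) : ℂ) ^ (x - 1)

section QPochRatio

variable {σ q : ℝ}

lemma norm_ofReal_lt_one (hq : 0 < q) (hq' : q < 1) : ‖(q : ℂ)‖ < 1 := by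
  rwa [Complex.norm_real, Real.norm_of_nonneg hq.le]

lemma one_sub_mul_mul_pow_ne_zero (hσ : |σ| ≤ 1) (hq : 0 < q) (hq' : q < 1) (k : ℕ) :
    1 - (σ * q : ℂ) * (q : ℂ) ^ k ≠ 0 := by
  have := (one_sub_mul_pow_succ_pos hσ hq hq' k).ne'
  rw [pow_succ', ← mul_assoc] at this
  exact_mod_cast this

lemma qPochInf_mul_self_ne_zero (hσ : |σ| ≤ 1) (hq : 0 < q) (hq' : q < 1) :
    qPochInf (σ * q) q ≠ 0 :=
  qPochInf_ne_zero (norm_ofReal_lt_one hq hq') (one_sub_mul_mul_pow_ne_zero hσ hq hq')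

lemma one_add_eulerStep_mul_qNumber (hσ : |σ| ≤ 1) (hq : 0 < q) (hq' : q < 1) (x : ℂ) (k : ℕ) :
    1 + eulerStep σ q k * qNumber q x =
      (1 - σ * (q : ℂ) ^ (x + 1) * (q : ℂ) ^ k) / (1 - σ * q * (q : ℂ) ^ k) := by
  have hden : 1 - (σ : ℂ) * (q : ℂ) ^ (k + 1) ≠ 0 := by
    simpa only [pow_succ', mul_assoc] using one_sub_mul_mul_pow_ne_zero hσ hq hq' k
  have hq_ne : (q : ℂ) ≠ 0 := by exact_mod_cast hq.ne'
  have hsub : (1 - q : ℂ) ≠ 0 := by exact_mod_cast (sub_pos.2 hq').ne'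
  rw [Complex.cpow_add _ _ hq_ne, Complex.cpow_one, mul_assoc (σ : ℂ) q, ← pow_succ', eulerStep,
    qNumber]
  push_cast
  field_simp
  ring

lemma tendsto_prod_one_add_eulerStep_cpow (hσ : |σ| ≤ 1) (hq : 0 < q) (hq' : q < 1) (x : ℂ) :
    Tendsto (fun n ↦ ∏ k ∈ Finset.range n, ((1 + eulerStep σ q k : ℝ) : ℂ) ^ (-x)) atTop
      (𝓝 (((1 - σ * q : ℝ) : ℂ) ^ x)) := by
  have hpos : 0 < 1 - σ * q := by simpa using one_sub_mul_pow_succ_pos hσ hq hq' 0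
  have hlim : Tendsto (fun n : ℕ ↦ (1 - σ * q ^ (n + 1)) / (1 - σ * q)) atTop
      (𝓝 (1 - σ * q)⁻¹) := by
    have hpow := (tendsto_pow_atTop_nhds_zero_of_lt_one hq.le hq').comp (tendsto_add_atTop_nat 1)
    simpa using ((hpow.const_mul σ).const_sub 1).div_const (1 - σ * q)
  have hcpow := ((Complex.continuous_ofReal.tendsto _).comp hlim).cpow
    (tendsto_const_nhds (x := -x)) (Complex.ofReal_mem_slitPlane.2 (inv_pos.2 hpos))
  have hval : (((1 - σ * q)⁻¹ : ℝ) : ℂ) ^ (-x) = ((1 - σ * q : ℝ) : ℂ) ^ x := by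
    rw [Complex.ofReal_inv, Complex.cpow_neg, ← Complex.inv_cpow, inv_inv]
    rw [← Complex.ofReal_inv, Complex.arg_ofReal_of_nonneg (inv_nonneg.2 hpos.le)]
    exact Real.pi_ne_zero.symm
  rw [hval] at hcpow
  refine hcpow.congr fun n ↦ ?_
  have htel := prod_range_div_cpow (one_sub_mul_pow_succ_pos hσ hq hq') (-x) n
  simp only [zero_add, pow_one] at htel
  simp only [one_add_eulerStep hσ hq hq', Function.comp_apply, ← htel]

lemma qPochRatio_add_one (hσ : |σ| ≤ 1) (hq : 0 < q) (hq' : q < 1) (x : ℂ) :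
    qPochRatio σ q (x + 1) = ∏' k, eulerFactor (eulerStep σ q k) (qNumber q x) x := by
  have hnorm := norm_ofReal_lt_one hq hq'
  have hlim := ((tendsto_prod_qPochInf (σ * (q : ℂ) ^ (x + 1)) hnorm).div
    (tendsto_prod_qPochInf (σ * q) hnorm) (qPochInf_mul_self_ne_zero hσ hq hq')).mul
    (tendsto_prod_one_add_eulerStep_cpow hσ hq hq' x)
  rw [qPochRatio, add_sub_cancel_right]
  refine tendsto_nhds_unique (hlim.congr fun n ↦ ?_)
    (multipliable_eulerFactor_eulerStep hσ hq hq' _ _).hasProd.tendsto_prod_nat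
  simp only [Pi.div_apply, eulerFactor, one_add_eulerStep_mul_qNumber hσ hq hq',
    Finset.prod_mul_distrib, Finset.prod_div_distrib]

end QPochRatio

section GammaEulerProduct

lemma tendsto_inv_GammaSeq (s : ℂ) :
    Tendsto (fun n ↦ (Complex.GammaSeq s n)⁻¹) atTop (𝓝 (Complex.Gamma s)⁻¹) := by
  by_cases hs : Complex.Gamma s = 0
  · obtain ⟨m, rfl⟩ := (Complex.Gamma_eq_zero_iff s).1 hs
    refine tendsto_const_nhds.congr' ?_
    filter_upwards [eventually_ge_atTop m] with n hn
    have hzero : ∏ j ∈ Finset.range (n + 1), (-(m : ℂ) + j) = 0 :=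
      Finset.prod_eq_zero (Finset.mem_range.2 (Nat.lt_succ_of_le hn)) (neg_add_cancel _)
    rw [hs, Complex.GammaSeq, hzero, div_zero]
  · exact (Complex.GammaSeq_tendsto_Gamma s).inv₀ hs

lemma prod_range_eulerFactor_inv (x : ℂ) (n : ℕ) :
    ∏ k ∈ Finset.range n, eulerFactor ((k : ℝ) + 1)⁻¹ x x =
      (∏ k ∈ Finset.range n, (x + 1 + k)) / n.factorial * ((n : ℂ) + 1) ^ (-x) := by
  have hstep (k : ℕ) : eulerFactor ((k : ℝ) + 1)⁻¹ x x = (x + 1 + k) / ((k + 1 : ℕ) : ℂ) *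
      ((((k + 1 : ℕ) + 1 : ℝ) / (k + 1) : ℝ) : ℂ) ^ (-x) := by
    have hk : (k : ℝ) + 1 ≠ 0 := by positivity
    have hk' : (k : ℂ) + 1 ≠ 0 := by exact_mod_cast hk
    rw [eulerFactor]
    congr 1
    · push_cast
      field_simp
      ring
    · congr 2
      push_cast
      field_simp
  have htel := prod_range_div_cpow (f := fun k : ℕ ↦ (k : ℝ) + 1) (fun k ↦ by positivity) (-x) n
  simp only [hstep, Finset.prod_mul_distrib, Finset.prod_div_distrib, htel, ← Nat.cast_prod,
    Finset.prod_range_add_one_eq_factorial]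
  simp

lemma prod_range_succ_eulerFactor_inv (x : ℂ) {n : ℕ} (hn : n ≠ 0) :
    ∏ k ∈ Finset.range (n + 1), eulerFactor ((k : ℝ) + 1)⁻¹ x x =
      (Complex.GammaSeq (x + 1) n)⁻¹ * (n / (n + 1)) * ((n : ℂ) / (n + 2)) ^ x := by
  have hn' : (n : ℂ) ≠ 0 := by exact_mod_cast hn
  have hdiv : ((n : ℂ) / (n + 2)) ^ x = (n : ℂ) ^ x * ((n : ℂ) + 2) ^ (-x) := by
    have := Complex.div_cpow_ofReal_nonneg (n.cast_nonneg (α := ℝ))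
      (by positivity : (0 : ℝ) ≤ n + 2) x
    push_cast at this
    rw [this, Complex.cpow_neg, div_eq_mul_inv]
  have hadd : ((n + 1 : ℕ) : ℂ) + 1 = n + 2 := by
    push_cast
    ring
  have hpow : (n : ℂ) ^ x ≠ 0 := by simp [Complex.cpow_eq_zero_iff, hn']
  have hfact : (n.factorial : ℂ) ≠ 0 := by exact_mod_cast n.factorial_ne_zero
  have hsucc : (n : ℂ) + 1 ≠ 0 := by exact_mod_cast n.succ_ne_zero
  rw [prod_range_eulerFactor_inv, Complex.GammaSeq, hdiv, hadd, Complex.cpow_add _ _ hn',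
    Complex.cpow_one, Nat.factorial_succ]
  push_cast
  field_simp

lemma multipliable_eulerFactor_inv (x : ℂ) :
    Multipliable fun k : ℕ ↦ eulerFactor ((k : ℝ) + 1)⁻¹ x x := by
  refine multipliable_eulerFactor (fun k ↦ ⟨?_, ?_⟩) (by simp) summable_inv_natCast_add_one_sq
  · linarith [inv_nonneg.2 (by positivity : 0 ≤ (k : ℝ) + 1)]
  · exact inv_le_one_of_one_le₀ (by linarith [k.cast_nonneg (α := ℝ)])

lemma tprod_eulerFactor_inv (x : ℂ) :
    ∏' k : ℕ, eulerFactor ((k : ℝ) + 1)⁻¹ x x = (Complex.Gamma (x + 1))⁻¹ := by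
  have hratio : Tendsto (fun n : ℕ ↦ ((n : ℂ) / (n + 2)) ^ x) atTop (𝓝 1) := by
    simpa using (tendsto_natCast_div_add_atTop (2 : ℂ)).cpow (tendsto_const_nhds (x := x))
      (Or.inl (by simp))
  have hlim := ((tendsto_inv_GammaSeq (x + 1)).mul (tendsto_natCast_div_add_atTop (1 : ℂ))).mul
    hratio
  rw [mul_one, mul_one] at hlim
  refine tendsto_nhds_unique ((multipliable_eulerFactor_inv x).hasProd.tendsto_prod_nat.comp
    (tendsto_add_atTop_nat 1)) (hlim.congr' ?_)
  filter_upwards [eventually_ne_atTop 0] with n hn using (prod_range_succ_eulerFactor_inv x hn).symm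

end GammaEulerProduct

lemma tendsto_qPochRatio {σ : ℝ} (hσ : |σ| ≤ 1) {β : ℕ → ℝ}
    (hβ : ∀ k, Tendsto (fun q ↦ eulerStep σ q k) (𝓝[<] 1) (𝓝 (β k))) (x : ℂ) :
    Tendsto (fun p : ℝ × ℂ ↦ qPochRatio σ p.1 p.2) (𝓝[<] 1 ×ˢ 𝓝 x)
      (𝓝 (∏' k, eulerFactor (β k) (x - 1) (x - 1))) := by
  have hshift : Tendsto (fun p : ℝ × ℂ ↦ (p.1, p.2 - 1)) (𝓝[<] 1 ×ˢ 𝓝 x) (𝓝[<] 1 ×ˢ 𝓝 (x - 1)) :=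
    tendsto_fst.prodMk (tendsto_snd.sub_const 1)
  refine ((tendsto_tprod_eulerFactor hσ hβ (x - 1)).comp hshift).congr' ?_
  filter_upwards [tendsto_fst.eventually eventually_mem_Ico_half_one] with p hp
  simp only [Function.comp_apply]
  rw [← qPochRatio_add_one hσ (one_half_pos.trans_le hp.1) hp.2, sub_add_cancel]

lemma tendsto_qPochRatio_one (x : ℂ) :
    Tendsto (fun p : ℝ × ℂ ↦ qPochRatio 1 p.1 p.2) (𝓝[<] 1 ×ˢ 𝓝 x) (𝓝 (Complex.Gamma x)⁻¹) := by
  simpa [tprod_eulerFactor_inv] using tendsto_qPochRatio (by simp) tendsto_eulerStep_one x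

lemma tendsto_qPochRatio_of_ne_one {σ : ℝ} (hσ : |σ| ≤ 1) (hσ' : σ ≠ 1) (x : ℂ) :
    Tendsto (fun p : ℝ × ℂ ↦ qPochRatio σ p.1 p.2) (𝓝[<] 1 ×ˢ 𝓝 x) (𝓝 1) := by
  simpa [eulerFactor] using tendsto_qPochRatio hσ (tendsto_eulerStep_of_ne_one hσ') x

section KernelStructure

/-- The numerator of `dualHahnQuotient`. -/
noncomputable def dualHahnNum (g : ℂ → ℂ) (v s t x y : ℂ) : ℂ :=
  g (t - s) * (g (v + t / 2 + x) * g (v + t / 2 - x)) * (g (2 * y) * g (-(2 * y)))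

/-- The denominator of `dualHahnQuotient`. -/
noncomputable def dualHahnDen (g : ℂ → ℂ) (v s t x y : ℂ) : ℂ :=
  g (v + s / 2 + y) * g (v + s / 2 - y) *
    (g ((t - s) / 2 + (x + y)) * g ((t - s) / 2 - (x + y))) *
    (g ((t - s) / 2 + (x - y)) * g ((t - s) / 2 - (x - y)))

/-- The quotient of values of `g` which for `g = 1 / Γ` is, up to a constant factor, the transition
density of the continuous dual Hahn process, and for `g z = (q^z; q)_∞` consists of the factors of
the Askey–Wilson transition density that do not involve the negative parameters. -/
noncomputable def dualHahnQuotient (g : ℂ → ℂ) (v s t x y : ℂ) : ℂ :=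
  dualHahnNum g v s t x y / dualHahnDen g v s t x y

/-- The quotient of values of `h` which for `h z = (-q^z; q)_∞` consists of the factors of the
Askey–Wilson transition density that involve the negative parameters. -/
noncomputable def balancedQuotient (h : ℂ → ℂ) (v w s t x y : ℂ) : ℂ :=
  h (v + w + s) * (h (w + t / 2 + x) * h (w + t / 2 - x)) /
    (h (v + w + t) * (h (w + s / 2 + y) * h (w + s / 2 - y)))

lemma dualHahnQuotient_mul (f g : ℂ → ℂ) (v s t x y : ℂ) :
    dualHahnQuotient (fun z ↦ f z * g z) v s t x y =
      dualHahnQuotient f v s t x y * dualHahnQuotient g v s t x y := by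
  simp only [dualHahnQuotient, dualHahnNum, dualHahnDen]
  ring

lemma balancedQuotient_mul (f h : ℂ → ℂ) (v w s t x y : ℂ) :
    balancedQuotient (fun z ↦ f z * h z) v w s t x y =
      balancedQuotient f v w s t x y * balancedQuotient h v w s t x y := by
  simp only [balancedQuotient]
  ring

lemma dualHahnQuotient_exp (α L v s t x y : ℂ) :
    dualHahnQuotient (fun z ↦ Complex.exp (α + L * z)) v s t x y = Complex.exp (-α) := by
  simp only [dualHahnQuotient, dualHahnNum, dualHahnDen, ← Complex.exp_add, ← Complex.exp_sub]
  congr 1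
  ring

lemma balancedQuotient_exp (α L v w s t x y : ℂ) :
    balancedQuotient (fun z ↦ Complex.exp (α + L * z)) v w s t x y = 1 := by
  simp only [balancedQuotient, ← Complex.exp_add, ← Complex.exp_sub]
  rw [← Complex.exp_zero]
  congr 1
  ring

variable {ι : Type*} {l : Filter ι} {g : ι → ℂ → ℂ} {x y : ι → ℂ} {x₀ y₀ : ℂ}

lemma tendsto_dualHahnQuotient {G : ℂ → ℂ}
    (hg : ∀ z, Tendsto (fun p : ι × ℂ ↦ g p.1 p.2) (l ×ˢ 𝓝 z) (𝓝 (G z)))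
    (hx : Tendsto x l (𝓝 x₀)) (hy : Tendsto y l (𝓝 y₀)) {v s t : ℂ}
    (hden : dualHahnDen G v s t x₀ y₀ ≠ 0) :
    Tendsto (fun i ↦ dualHahnQuotient (g i) v s t (x i) (y i)) l
      (𝓝 (dualHahnQuotient G v s t x₀ y₀)) := by
  have hcomp {z : ι → ℂ} {z₀ : ℂ} (hz : Tendsto z l (𝓝 z₀)) :
      Tendsto (fun i ↦ g i (z i)) l (𝓝 (G z₀)) := (hg z₀).comp (tendsto_id.prodMk hz)
  have hy2 := hy.const_mul 2
  exact (((hcomp tendsto_const_nhds).mul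
      ((hcomp (hx.const_add _)).mul (hcomp (hx.const_sub _)))).mul
      ((hcomp hy2).mul (hcomp hy2.neg))).div
    ((((hcomp (hy.const_add _)).mul (hcomp (hy.const_sub _))).mul
      ((hcomp ((hx.add hy).const_add _)).mul (hcomp ((hx.add hy).const_sub _)))).mul
      ((hcomp ((hx.sub hy).const_add _)).mul (hcomp ((hx.sub hy).const_sub _)))) hden

lemma tendsto_balancedQuotient_one
    (hg : ∀ z, Tendsto (fun p : ι × ℂ ↦ g p.1 p.2) (l ×ˢ 𝓝 z) (𝓝 1))
    (hx : Tendsto x l (𝓝 x₀)) (hy : Tendsto y l (𝓝 y₀)) (v w s t : ℂ) :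
    Tendsto (fun i ↦ balancedQuotient (g i) v w s t (x i) (y i)) l (𝓝 1) := by
  have hcomp {z : ι → ℂ} {z₀ : ℂ} (hz : Tendsto z l (𝓝 z₀)) :
      Tendsto (fun i ↦ g i (z i)) l (𝓝 1) := (hg z₀).comp (tendsto_id.prodMk hz)
  have hval : balancedQuotient (fun _ ↦ 1) v w s t x₀ y₀ = 1 := by simp [balancedQuotient]
  rw [← hval]
  exact ((hcomp tendsto_const_nhds).mul
      ((hcomp (hx.const_add _)).mul (hcomp (hx.const_sub _)))).div
    ((hcomp tendsto_const_nhds).mul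
      ((hcomp (hy.const_add _)).mul (hcomp (hy.const_sub _)))) (by simp)

end KernelStructure

section AskeyWilsonKernel

/-- The Askey–Wilson transition density with parameters `(q^v, -q^w, q^u, -q^r, q)` (which does not
depend on `u` and `r`) between the points `cos θ`, with `e^(iθ) = q^x`, at time `q^t` and `cos φ`,
with `e^(iφ) = q^y`, at time `q^s`, up to the elementary factor `2π sin φ`. -/
noncomputable def askeyWilsonKernel (q : ℝ) (v w s t x y : ℂ) : ℂ :=
  qPochInf q q * dualHahnQuotient (fun z ↦ qPochInf ((q : ℂ) ^ z) q) v s t x y *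
    balancedQuotient (fun z ↦ qPochInf (-(q : ℂ) ^ z) q) v w s t x y

lemma qPochInf_mul_cpow {σ q : ℝ} (hσ : |σ| ≤ 1) (hq : 0 < q) (hq' : q < 1) (z : ℂ) :
    qPochInf (σ * (q : ℂ) ^ z) q =
      Complex.exp (Complex.log (qPochInf (σ * q) q) + Complex.log (1 - σ * q : ℝ) +
        -Complex.log (1 - σ * q : ℝ) * z) * qPochRatio σ q z := by
  have hbase : ((1 - σ * q : ℝ) : ℂ) ≠ 0 := by
    exact_mod_cast (by simpa using one_sub_mul_pow_succ_pos hσ hq hq' 0 : 0 < 1 - σ * q).ne'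
  have hpoch := qPochInf_mul_self_ne_zero hσ hq hq'
  have hcpow : ((1 - σ * q : ℝ) : ℂ) ^ (z - 1) ≠ 0 :=
    fun h ↦ hbase ((Complex.cpow_eq_zero_iff _ _).1 h).1
  have hexp : Complex.exp (Complex.log (qPochInf (σ * q) q) + Complex.log (1 - σ * q : ℝ) +
      -Complex.log (1 - σ * q : ℝ) * z) =
      qPochInf (σ * q) q * (((1 - σ * q : ℝ) : ℂ) ^ (z - 1))⁻¹ := by
    rw [← Complex.cpow_neg, Complex.cpow_def_of_ne_zero hbase, add_assoc, Complex.exp_add,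
      Complex.exp_log hpoch]
    congr 2
    ring
  rw [hexp, qPochRatio]
  field_simp

lemma one_sub_mul_askeyWilsonKernel {q : ℝ} (hq : 0 < q) (hq' : q < 1) (v w s t x y : ℂ) :
    (1 - q) * askeyWilsonKernel q v w s t x y =
      dualHahnQuotient (qPochRatio 1 q) v s t x y *
        balancedQuotient (qPochRatio (-1) q) v w s t x y := by
  have hpos := qPochInf_mul_cpow (σ := 1) (by simp) hq hq'
  have hneg := qPochInf_mul_cpow (σ := -1) (by simp) hq hq'
  have hpoch := qPochInf_mul_self_ne_zero (σ := 1) (by simp) hq hq'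
  have hsub : (1 - q : ℂ) ≠ 0 := by exact_mod_cast (sub_pos.2 hq').ne'
  simp only [Complex.ofReal_one, one_mul] at hpos hpoch
  simp only [Complex.ofReal_neg, Complex.ofReal_one, neg_one_mul] at hneg
  simp only [askeyWilsonKernel, hpos, hneg, dualHahnQuotient_mul, dualHahnQuotient_exp,
    balancedQuotient_mul, balancedQuotient_exp, one_mul]
  rw [Complex.exp_neg, Complex.exp_add, Complex.exp_log hpoch, Complex.ofReal_sub,
    Complex.ofReal_one, Complex.exp_log hsub]
  field_simp

lemma tendsto_one_sub_mul_askeyWilsonKernel {ι : Type*} {l : Filter ι} {q : ι → ℝ}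
    (hq : Tendsto q l (𝓝[<] 1)) {x y : ι → ℂ} {x₀ y₀ : ℂ} (hx : Tendsto x l (𝓝 x₀))
    (hy : Tendsto y l (𝓝 y₀)) {v s t : ℂ} (w : ℂ)
    (hden : dualHahnDen (fun z ↦ (Complex.Gamma z)⁻¹) v s t x₀ y₀ ≠ 0) :
    Tendsto (fun i ↦ (1 - q i) * askeyWilsonKernel (q i) v w s t (x i) (y i)) l
      (𝓝 (dualHahnQuotient (fun z ↦ (Complex.Gamma z)⁻¹) v s t x₀ y₀)) := by
  have hq_prod (z : ℂ) : Tendsto (fun p : ι × ℂ ↦ (q p.1, p.2)) (l ×ˢ 𝓝 z) (𝓝[<] 1 ×ˢ 𝓝 z) :=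
    hq.prodMap tendsto_id
  have hdual (z : ℂ) : Tendsto (fun p : ι × ℂ ↦ qPochRatio 1 (q p.1) p.2) (l ×ˢ 𝓝 z)
      (𝓝 (Complex.Gamma z)⁻¹) := by
    simpa only [Function.comp_def] using (tendsto_qPochRatio_one z).comp (hq_prod z)
  have hbalanced (z : ℂ) : Tendsto (fun p : ι × ℂ ↦ qPochRatio (-1) (q p.1) p.2) (l ×ˢ 𝓝 z)
      (𝓝 1) := by
    simpa only [Function.comp_def] using
      (tendsto_qPochRatio_of_ne_one (by simp) (by norm_num) z).comp (hq_prod z)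
  have hprod := (tendsto_dualHahnQuotient (g := fun i ↦ qPochRatio 1 (q i))
    (G := fun z ↦ (Complex.Gamma z)⁻¹) hdual hx hy hden).mul
    (tendsto_balancedQuotient_one (g := fun i ↦ qPochRatio (-1) (q i)) hbalanced hx hy v w s t)
  rw [mul_one] at hprod
  refine hprod.congr' ?_
  filter_upwards [hq.eventually eventually_mem_Ico_half_one] with i hi using
    (one_sub_mul_askeyWilsonKernel (one_half_pos.trans_le hi.1) hi.2 v w s t (x i) (y i)).symm

end AskeyWilsonKernel

section GammaSq

lemma GammaSq_ne_zero {a b : ℝ} (h : b ≠ 0 ∨ ∀ n : ℕ, a ≠ -n) : GammaSq a b ≠ 0 := by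
  have hne (c : ℝ) (hc : c = 0 → b = 0) : Complex.Gamma (a + c * Complex.I) ≠ 0 := by
    refine Complex.Gamma_ne_zero fun n hn ↦ ?_
    have hre : a = -n := by simpa using congrArg Complex.re hn
    have him : c = 0 := by simpa using congrArg Complex.im hn
    exact h.elim (fun hb ↦ hb (hc him)) (fun ha ↦ ha n hre)
  refine mul_ne_zero (hne b id) ?_
  simpa [sub_eq_add_neg] using hne (-b) neg_eq_zero.1

lemma dualHahnNum_inv_Gamma (v s t a b : ℝ) :
    dualHahnNum (fun z ↦ (Complex.Gamma z)⁻¹) v s t (a * Complex.I) (b * Complex.I) =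
      (Complex.Gamma (t - s : ℝ) * GammaSq (v + t / 2) a * GammaSq 0 (2 * b))⁻¹ := by
  simp only [dualHahnNum, GammaSq]
  push_cast
  ring_nf

lemma dualHahnDen_inv_Gamma (v s t a b : ℝ) :
    dualHahnDen (fun z ↦ (Complex.Gamma z)⁻¹) v s t (a * Complex.I) (b * Complex.I) =
      (GammaSq (v + s / 2) b * GammaSq ((t - s) / 2) (a + b) *
        GammaSq ((t - s) / 2) (a - b))⁻¹ := by
  simp only [dualHahnDen, GammaSq]
  push_cast
  ring_nf

lemma dualHahnDen_inv_Gamma_ne_zero {v s t a b : ℝ} (hts : ∀ n : ℕ, (t - s) / 2 ≠ -n)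
    (hb : b ≠ 0) (hab : a + b ≠ 0) :
    dualHahnDen (fun z ↦ (Complex.Gamma z)⁻¹) v s t (a * Complex.I) (b * Complex.I) ≠ 0 := by
  rw [dualHahnDen_inv_Gamma]
  exact inv_ne_zero (mul_ne_zero (mul_ne_zero (GammaSq_ne_zero (.inl hb))
    (GammaSq_ne_zero (.inl hab))) (GammaSq_ne_zero (.inr hts)))

end GammaSq

section WeakAsymmetry

lemma tendsto_sqrt_natCast_atTop : Tendsto (fun N : ℕ ↦ √(N : ℝ)) atTop atTop :=
  Real.tendsto_sqrt_atTop.comp tendsto_natCast_atTop_atTop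

lemma tendsto_sqrt_mul_sub_of_hasDerivAt {f : ℝ → ℝ} {f' x : ℝ} (hf : HasDerivAt f f' x)
    (v : ℝ) : Tendsto (fun N : ℕ ↦ √N * (f (x + v / √N) - f x)) atTop (𝓝 (v * f')) := by
  have hnorm : Tendsto (fun N : ℕ ↦ ‖√(N : ℝ)‖) atTop atTop :=
    tendsto_norm_atTop_atTop.comp tendsto_sqrt_natCast_atTop
  simpa [div_eq_inv_mul] using hf.hasFDerivAt.lim v hnorm

lemma tendsto_qN : Tendsto qN atTop (𝓝[<] 1) := by
  refine tendsto_nhdsWithin_iff.2 ⟨?_, ?_⟩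
  · rw [← Real.exp_zero]
    exact (tendsto_sqrt_natCast_atTop.const_div_atTop (-2)).rexp
  · filter_upwards [eventually_gt_atTop 0] with N hN
    have : 0 < √(N : ℝ) := by positivity
    exact Real.exp_lt_one_iff.2 (div_neg_of_neg_of_pos (by norm_num) this)

lemma tendsto_sqrt_mul_one_sub_qN : Tendsto (fun N : ℕ ↦ √N * (1 - qN N)) atTop (𝓝 2) := by
  simpa [qN, ← mul_neg] using (tendsto_sqrt_mul_sub_of_hasDerivAt (Real.hasDerivAt_exp 0) (-2)).neg

lemma arccos_one_sub_two_mul_sq {y : ℝ} (hy : 0 ≤ y) (hy' : y ≤ 1) :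
    Real.arccos (1 - 2 * y ^ 2) = 2 * Real.arcsin y := by
  have hcos : Real.cos (2 * Real.arcsin y) = 1 - 2 * y ^ 2 := by
    rw [Real.cos_two_mul, Real.cos_sq', Real.sin_arcsin (by linarith) hy']
    ring
  rw [← hcos, Real.arccos_cos]
  · linarith [Real.arcsin_nonneg.2 hy]
  · linarith [Real.arcsin_le_pi_div_two y]

lemma tendsto_sqrt_mul_arccos {m : ℝ} (hm : 0 ≤ m) :
    Tendsto (fun N : ℕ ↦ √N * Real.arccos (1 - m / (2 * N))) atTop (𝓝 (√m)) := by
  have hderiv : HasDerivAt Real.arcsin 1 0 := by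
    simpa using Real.hasDerivAt_arcsin (x := 0) (by norm_num) (by norm_num)
  have hlim := (tendsto_sqrt_mul_sub_of_hasDerivAt hderiv (√m / 2)).const_mul 2
  rw [mul_one, mul_div_cancel₀ _ two_ne_zero] at hlim
  have hsmall : Tendsto (fun N : ℕ ↦ √m / 2 / √N) atTop (𝓝 0) :=
    tendsto_sqrt_natCast_atTop.const_div_atTop _
  refine hlim.congr' ?_
  filter_upwards [hsmall.eventually_le_const one_pos] with N hle
  have hsq : 1 - m / (2 * N) = 1 - 2 * (√m / 2 / √N) ^ 2 := by
    rw [div_pow, div_pow, Real.sq_sqrt hm, Real.sq_sqrt N.cast_nonneg]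
    ring
  rw [hsq, arccos_one_sub_two_mul_sq (by positivity) hle, zero_add, Real.arcsin_zero]
  ring

/-- The exponent `x` for which `e^(-iφ) = q_N^x`. -/
noncomputable def phaseExponent (N : ℕ) (φ : ℝ) : ℂ := (φ * √N / 2 : ℝ) * Complex.I

variable {N : ℕ}

lemma phaseExponent_neg (φ : ℝ) : phaseExponent N (-φ) = -phaseExponent N φ := by
  simp only [phaseExponent]
  push_cast
  ring

lemma phaseExponent_add (φ ψ : ℝ) :
    phaseExponent N (φ + ψ) = phaseExponent N φ + phaseExponent N ψ := by
  simp only [phaseExponent]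
  push_cast
  ring

lemma phaseExponent_sub (φ ψ : ℝ) :
    phaseExponent N (φ - ψ) = phaseExponent N φ - phaseExponent N ψ := by
  rw [sub_eq_add_neg, phaseExponent_add, phaseExponent_neg, sub_eq_add_neg]

lemma phaseExponent_two_mul (φ : ℝ) : phaseExponent N (2 * φ) = 2 * phaseExponent N φ := by
  rw [two_mul, phaseExponent_add, two_mul]

lemma tendsto_phaseExponent_arccos {m : ℝ} (hm : 0 ≤ m) :
    Tendsto (fun N : ℕ ↦ phaseExponent N (Real.arccos (1 - m / (2 * N)))) atTop
      (𝓝 ((√m / 2 : ℝ) * Complex.I)) := by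
  have hlim := ((Complex.continuous_ofReal.tendsto _).comp
    ((tendsto_sqrt_mul_arccos hm).div_const 2)).mul_const Complex.I
  simpa only [phaseExponent, Function.comp_def, mul_comm (√_)] using hlim

lemma qN_cpow (N : ℕ) (z : ℂ) : (qN N : ℂ) ^ z = Complex.exp (-2 / √N * z) := by
  rw [qN, Complex.cpow_def_of_ne_zero (by exact_mod_cast (Real.exp_pos _).ne'),
    ← Complex.ofReal_log (Real.exp_pos _).le, Real.log_exp]
  push_cast
  rfl

lemma qpow_eq_qN_cpow (N : ℕ) (x : ℝ) : qpow N x = (qN N : ℂ) ^ (x : ℂ) := by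
  rw [qpow, qN_cpow, Complex.ofReal_exp]
  push_cast
  rw [mul_div_right_comm]

lemma eI_eq_qN_cpow (hN : N ≠ 0) (φ : ℝ) : eI φ = (qN N : ℂ) ^ (-phaseExponent N φ) := by
  have hsqrt : (√N : ℂ) ≠ 0 := by exact_mod_cast (by positivity : √(N : ℝ) ≠ 0)
  rw [eI, qN_cpow, phaseExponent]
  congr 1
  push_cast
  field_simp

lemma qpow_mul_eI (hN : N ≠ 0) (x φ : ℝ) :
    qpow N x * eI φ = (qN N : ℂ) ^ (x - phaseExponent N φ) := by
  have hq : (qN N : ℂ) ≠ 0 := by exact_mod_cast (Real.exp_pos _).ne'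
  rw [qpow_eq_qN_cpow, eI_eq_qN_cpow hN, ← Complex.cpow_add _ _ hq, sub_eq_add_neg]

end WeakAsymmetry

/-- The transition density, from `1 - ρ / (2 * N)` at time `q_N^t` to `1 - m / (2 * N)` at time
`q_N^s`, of the Askey–Wilson process with parameters `(q_N^v, -q_N^w, q_N^u, -q_N^r, q_N)`, with
respect to the variable `m`. -/
noncomputable def rescaledAskeyWilsonDensity (v w s t m ρ : ℝ) (N : ℕ) : ℂ :=
  (qPochInf (Complex.ofReal (qN N)) (qN N) * qPochInf (-(qpow N (v + w + s))) (qN N) *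
   qPochInf (qpow N (t - s)) (qN N) *
   ((qPochInf (qpow N (v + t / 2) * eI (Real.arccos (1 - ρ / (2 * (N : ℝ))))) (qN N) *
     qPochInf (-(qpow N (w + t / 2)) * eI (Real.arccos (1 - ρ / (2 * (N : ℝ))))) (qN N)) *
    (qPochInf (qpow N (v + t / 2) * eI (-(Real.arccos (1 - ρ / (2 * (N : ℝ)))))) (qN N) *
     qPochInf (-(qpow N (w + t / 2)) * eI (-(Real.arccos (1 - ρ / (2 * (N : ℝ)))))) (qN N))) *
   qPochInf (eI (2 * Real.arccos (1 - m / (2 * (N : ℝ))))) (qN N) *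
   qPochInf (eI (-2 * Real.arccos (1 - m / (2 * (N : ℝ))))) (qN N)) /
  (Complex.ofReal (4 * Real.pi * (N : ℝ)) * Complex.ofReal (Real.sqrt (m / (N : ℝ))) *
   qPochInf (-(qpow N (v + w + t))) (qN N) *
   ((qPochInf (qpow N (v + s / 2) * eI (Real.arccos (1 - m / (2 * (N : ℝ))))) (qN N) *
     qPochInf (-(qpow N (w + s / 2)) * eI (Real.arccos (1 - m / (2 * (N : ℝ))))) (qN N)) *
    (qPochInf (qpow N (v + s / 2) * eI (-(Real.arccos (1 - m / (2 * (N : ℝ)))))) (qN N) *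
     qPochInf (-(qpow N (w + s / 2)) * eI (-(Real.arccos (1 - m / (2 * (N : ℝ)))))) (qN N))) *
   ((qPochInf (qpow N ((t - s) / 2) *
       eI (Real.arccos (1 - ρ / (2 * (N : ℝ))) + Real.arccos (1 - m / (2 * (N : ℝ))))) (qN N) *
     qPochInf (qpow N ((t - s) / 2) *
       eI (Real.arccos (1 - ρ / (2 * (N : ℝ))) - Real.arccos (1 - m / (2 * (N : ℝ))))) (qN N)) *
    (qPochInf (qpow N ((t - s) / 2) *
       eI (-(Real.arccos (1 - ρ / (2 * (N : ℝ))) + Real.arccos (1 - m / (2 * (N : ℝ)))))) (qN N) *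
     qPochInf (qpow N ((t - s) / 2) *
       eI (-(Real.arccos (1 - ρ / (2 * (N : ℝ))) - Real.arccos (1 - m / (2 * (N : ℝ)))))) (qN N))))

/-- The transition density from `ρ` at time `t` to `m` at time `s` of the continuous dual Hahn
process. -/
noncomputable def dualHahnDensity (v s t m ρ : ℝ) : ℂ :=
  GammaSq (v + s / 2) (Real.sqrt m / 2) *
    GammaSq ((t - s) / 2) ((Real.sqrt ρ + Real.sqrt m) / 2) *
    GammaSq ((t - s) / 2) ((Real.sqrt ρ - Real.sqrt m) / 2) /
    (Complex.ofReal (8 * Real.pi * Real.sqrt m) * Complex.Gamma ((t - s : ℝ) : ℂ) *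
     GammaSq (v + t / 2) (Real.sqrt ρ / 2) * GammaSq 0 (Real.sqrt m))

lemma rescaledAskeyWilsonDensity_eq (v w s t m ρ : ℝ) {N : ℕ} (hN : N ≠ 0) :
    rescaledAskeyWilsonDensity v w s t m ρ N =
      askeyWilsonKernel (qN N) v w s t
        (phaseExponent N (Real.arccos (1 - ρ / (2 * N))))
        (phaseExponent N (Real.arccos (1 - m / (2 * N)))) / (4 * Real.pi * √N * √m) := by
  have hfactor : ((4 * Real.pi * N : ℝ) : ℂ) * (√(m / N) : ℝ) = 4 * Real.pi * √N * √m := by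
    have hsqrt : √(N : ℝ) ≠ 0 := by positivity
    have hreal : 4 * Real.pi * N * √(m / N) = 4 * Real.pi * √N * √m := by
      rw [Real.sqrt_div' _ N.cast_nonneg]
      nth_rw 1 [← Real.mul_self_sqrt N.cast_nonneg]
      field_simp
    exact_mod_cast congrArg Complex.ofReal hreal
  rw [rescaledAskeyWilsonDensity, hfactor]
  simp only [neg_mul, qpow_mul_eI hN, phaseExponent_neg, phaseExponent_add, phaseExponent_sub,
    sub_neg_eq_add]
  simp only [askeyWilsonKernel, dualHahnQuotient, dualHahnNum, dualHahnDen, balancedQuotient,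
    qpow_eq_qN_cpow, eI_eq_qN_cpow hN, phaseExponent_neg, phaseExponent_two_mul, neg_neg]
  push_cast
  ring_nf

lemma dualHahnDensity_eq (v s t m ρ : ℝ) :
    dualHahnDensity v s t m ρ =
      dualHahnQuotient (fun z ↦ (Complex.Gamma z)⁻¹) v s t ((√ρ / 2 : ℝ) * Complex.I)
        ((√m / 2 : ℝ) * Complex.I) / (8 * Real.pi * √m) := by
  rw [dualHahnDensity, dualHahnQuotient, dualHahnNum_inv_Gamma, dualHahnDen_inv_Gamma, add_div,
    sub_div, mul_div_cancel₀ _ two_ne_zero, inv_div_inv, div_div]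
  push_cast
  ring_nf

theorem statement3_general (v w s t m ρ : ℝ) (hts : ∀ n : ℕ, t - s ≠ -n) (hm : 0 < m)
    (hρ : 0 < ρ) :
    Tendsto (rescaledAskeyWilsonDensity v w s t m ρ) atTop (𝓝 (dualHahnDensity v s t m ρ)) := by
  have hhalf (n : ℕ) : (t - s) / 2 ≠ -n := fun h ↦
    hts (2 * n) (by push_cast; linear_combination 2 * h)
  have hden := dualHahnDen_inv_Gamma_ne_zero (v := v) (a := √ρ / 2) (b := √m / 2) hhalf
    (by positivity) (by positivity)
  have hkernel := tendsto_one_sub_mul_askeyWilsonKernel tendsto_qN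
    (tendsto_phaseExponent_arccos hρ.le) (tendsto_phaseExponent_arccos hm.le) w hden
  have hscale := ((Complex.continuous_ofReal.tendsto _).comp
    tendsto_sqrt_mul_one_sub_qN).const_mul (4 * Real.pi * √m : ℂ)
  have hsqrt : (√m : ℂ) ≠ 0 := by exact_mod_cast (Real.sqrt_pos.2 hm).ne'
  have hlim := hkernel.div hscale (by simp [hsqrt, Real.pi_ne_zero])
  have hconst : (8 * Real.pi * √m : ℂ) = 4 * Real.pi * √m * (2 : ℝ) := by
    push_cast
    ring
  rw [dualHahnDensity_eq, hconst]
  refine hlim.congr' ?_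
  filter_upwards [eventually_ne_atTop 0, tendsto_qN.eventually eventually_mem_Ico_half_one]
    with N hN hq
  have hsub : (1 - qN N : ℂ) ≠ 0 := by exact_mod_cast (sub_pos.2 hq.2).ne'
  rw [rescaledAskeyWilsonDensity_eq v w s t m ρ hN, Pi.div_apply, Function.comp_apply]
  push_cast
  field_simp

theorem statement3 (v w s t m ρ : ℝ) (hw : 0 < w) (hst : s < t) (hm : 0 < m) (hρ : 0 < ρ) :
    Tendsto (fun N : ℕ =>
      (qPochInf (Complex.ofReal (qN N)) (qN N) * qPochInf (-(qpow N (v + w + s))) (qN N) *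
       qPochInf (qpow N (t - s)) (qN N) *
       ((qPochInf (qpow N (v + t / 2) * eI (Real.arccos (1 - ρ / (2 * (N : ℝ))))) (qN N) *
         qPochInf (-(qpow N (w + t / 2)) * eI (Real.arccos (1 - ρ / (2 * (N : ℝ))))) (qN N)) *
        (qPochInf (qpow N (v + t / 2) * eI (-(Real.arccos (1 - ρ / (2 * (N : ℝ)))))) (qN N) *
         qPochInf (-(qpow N (w + t / 2)) * eI (-(Real.arccos (1 - ρ / (2 * (N : ℝ)))))) (qN N))) *
       qPochInf (eI (2 * Real.arccos (1 - m / (2 * (N : ℝ))))) (qN N) *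
       qPochInf (eI (-2 * Real.arccos (1 - m / (2 * (N : ℝ))))) (qN N)) /
      (Complex.ofReal (4 * Real.pi * (N : ℝ)) * Complex.ofReal (Real.sqrt (m / (N : ℝ))) *
       qPochInf (-(qpow N (v + w + t))) (qN N) *
       ((qPochInf (qpow N (v + s / 2) * eI (Real.arccos (1 - m / (2 * (N : ℝ))))) (qN N) *
         qPochInf (-(qpow N (w + s / 2)) * eI (Real.arccos (1 - m / (2 * (N : ℝ))))) (qN N)) *
        (qPochInf (qpow N (v + s / 2) * eI (-(Real.arccos (1 - m / (2 * (N : ℝ)))))) (qN N) *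
         qPochInf (-(qpow N (w + s / 2)) * eI (-(Real.arccos (1 - m / (2 * (N : ℝ)))))) (qN N))) *
       ((qPochInf (qpow N ((t - s) / 2) *
           eI (Real.arccos (1 - ρ / (2 * (N : ℝ))) + Real.arccos (1 - m / (2 * (N : ℝ))))) (qN N) *
         qPochInf (qpow N ((t - s) / 2) *
           eI (Real.arccos (1 - ρ / (2 * (N : ℝ))) - Real.arccos (1 - m / (2 * (N : ℝ))))) (qN N)) *
        (qPochInf (qpow N ((t - s) / 2) *
           eI (-(Real.arccos (1 - ρ / (2 * (N : ℝ))) + Real.arccos (1 - m / (2 * (N : ℝ)))))) (qN N) *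
         qPochInf (qpow N ((t - s) / 2) *
           eI (-(Real.arccos (1 - ρ / (2 * (N : ℝ))) - Real.arccos (1 - m / (2 * (N : ℝ)))))) (qN N)))))
      atTop
      (nhds (GammaSq (v + s / 2) (Real.sqrt m / 2) *
        GammaSq ((t - s) / 2) ((Real.sqrt ρ + Real.sqrt m) / 2) *
        GammaSq ((t - s) / 2) ((Real.sqrt ρ - Real.sqrt m) / 2) /
        (Complex.ofReal (8 * Real.pi * Real.sqrt m) * Complex.Gamma ((t - s : ℝ) : ℂ) *
         GammaSq (v + t / 2) (Real.sqrt ρ / 2) * GammaSq 0 (Real.sqrt m)))) :=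
  statement3_general v w s t m ρ (fun n ↦ by linarith [n.cast_nonneg (α := ℝ)]) hm hρ
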